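/- arXiv:2512.14966 — 2 statements merged into one kernel-verified Lean document; each statement's English description precedes it below -/
import Mathlib

section
/- Let d ∈ ℕ with d ≥ 1. Then for every k ≥ 19^(2d−1) + 1 and every support preserving map F : S_{ℓ∞^k} → S_{ℓ1^k} (not assumed continuous or injective), one has ω_F(1/d) ≥ 1/2, i.e., there exist x, y ∈ S_{ℓ∞^k} with ‖x − y‖_∞ ≤ 1/d and ‖F(x) − F(y)‖_1 ≥ 1/2. -/
/-- The sup norm (`ℓ∞` norm) on `ℝ^k`. -/
noncomputable def supNorm {k : ℕ} (x : Fin k → ℝ) : ℝ := ⨆ i, |x i|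

/-- The `ℓ1` norm on `ℝ^k`. -/
noncomputable def l1Norm {k : ℕ} (x : Fin k → ℝ) : ℝ := ∑ i, |x i|

/-!
Averaging `|F|` over all rearrangements of the coordinates makes `F` permutation equivariant and
does not increase its modulus of continuity. Take `x` with `b ^ t` coordinates equal to `1 - t / d`
for each `t ≤ d`. By equivariance the averaged `F x` has the same mass `m t` on every coordinate of
level `t`, so `∑ t, b ^ t * m t = 1` and `m d = 0`, whence
`∑ t, b ^ t * (m t - m (t + 1)) ≥ 1 - 1 / b`. Exchanging every coordinate of level `t` with one of
level `t + 1`, simultaneously for all even `t` or for all odd `t`, changes `x` by at most `1 / d`,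
and one of the two carries at least half of that sum; the exchange counts each of its pairs twice.
-/

open Equiv Function

section Exchange

variable {β ι : Type*} {u v : β → ι}

theorem exists_perm_exchange (huv : Injective (Sum.elim u v)) :
    ∃ π : Perm ι, (∀ s, π (Sum.elim u v s) = Sum.elim u v s.swap) ∧
      ∀ i ∉ Set.range (Sum.elim u v), π i = i :=
  ⟨Perm.viaEmbedding (sumComm β β) ⟨_, huv⟩, Perm.viaEmbedding_apply _ ⟨_, huv⟩,
    Perm.viaEmbedding_apply_of_notMem _ ⟨_, huv⟩⟩

theorem two_mul_sum_abs_sub_le_of_exchange [Fintype β] [Fintype ι]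
    (huv : Injective (Sum.elim u v)) {π : Perm ι}
    (hπ : ∀ s, π (Sum.elim u v s) = Sum.elim u v s.swap) (g : ι → ℝ) :
    2 * ∑ a, |g (u a) - g (v a)| ≤ ∑ i, |g i - g (π i)| :=
  calc 2 * ∑ a, |g (u a) - g (v a)|
      = ∑ s, |g (Sum.elim u v s) - g (π (Sum.elim u v s))| := by
        simp only [hπ, Fintype.sum_sum_type, Sum.elim_inl, Sum.elim_inr, Sum.swap_inl,
          Sum.swap_inr, abs_sub_comm (g (v _)), two_mul]
    _ = ∑ i ∈ Finset.univ.map ⟨_, huv⟩, |g i - g (π i)| :=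
        (Finset.sum_map Finset.univ ⟨_, huv⟩ fun i => |g i - g (π i)|).symm
    _ ≤ ∑ i, |g i - g (π i)| := Finset.sum_le_univ_sum_of_nonneg fun _ => abs_nonneg _

theorem abs_sub_le_of_exchange {π : Perm ι}
    (hπ : ∀ s, π (Sum.elim u v s) = Sum.elim u v s.swap)
    (hfix : ∀ i ∉ Set.range (Sum.elim u v), π i = i)
    {x : ι → ℝ} {δ : ℝ} (hδ : 0 ≤ δ) (hx : ∀ a, |x (u a) - x (v a)| ≤ δ) (i : ι) :
    |x i - x (π i)| ≤ δ := by
  by_cases hi : i ∈ Set.range (Sum.elim u v)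
  · obtain ⟨a | a, rfl⟩ := hi <;> rw [hπ]
    · exact hx a
    · exact (abs_sub_comm _ _).trans_le (hx a)
  · simpa [hfix i hi] using hδ

end Exchange

theorem supNorm_comp_perm {k : ℕ} (x : Fin k → ℝ) (σ : Perm (Fin k)) :
    supNorm (x ∘ σ) = supNorm x :=
  σ.iSup_comp (g := fun i => |x i|)

theorem l1Norm_comp_perm {k : ℕ} (x : Fin k → ℝ) (σ : Perm (Fin k)) :
    l1Norm (x ∘ σ) = l1Norm x :=
  Equiv.sum_comp σ fun i => |x i|

theorem sum_sum_abs_apply_symm {k : ℕ} (G : Perm (Fin k) → Fin k → ℝ) :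
    ∑ i, ∑ σ, |G σ (σ.symm i)| = ∑ σ, l1Norm (G σ) := by
  rw [Finset.sum_comm]
  exact Finset.sum_congr rfl fun σ _ => l1Norm_comp_perm (G σ) σ.symm

/-- The permutation equivariant map obtained by averaging `|F|` over all rearrangements of the
coordinates; it reduces lower bounds on the modulus of continuity of `F` to the equivariant case. -/
noncomputable def symmetrization {k : ℕ} (F : (Fin k → ℝ) → Fin k → ℝ) (x : Fin k → ℝ)
    (i : Fin k) : ℝ :=
  (∑ σ : Perm (Fin k), |F (x ∘ σ) (σ.symm i)|) / k.factorial

section symmetrization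

variable {k : ℕ} {F : (Fin k → ℝ) → Fin k → ℝ} {x : Fin k → ℝ}

theorem symmetrization_comp_perm (F : (Fin k → ℝ) → Fin k → ℝ) (x : Fin k → ℝ)
    (π : Perm (Fin k)) : symmetrization F (x ∘ π) = symmetrization F x ∘ π := by
  ext i
  simp only [symmetrization, comp_apply]
  rw [← Equiv.sum_comp (Equiv.mulLeft π) fun σ => |F (x ∘ σ) (σ.symm (π i))|]
  simp [Perm.mul_def, comp_assoc]

theorem symmetrization_factorsThrough (F : (Fin k → ℝ) → Fin k → ℝ) (x : Fin k → ℝ) :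
    (symmetrization F x).FactorsThrough x := by
  intro i j hij
  have hswap : x ∘ swap i j = x := by
    rw [comp_swap_eq_update, hij, update_eq_self, ← hij, update_eq_self]
  simpa [hswap] using congrFun (symmetrization_comp_perm F x (swap i j)) i

theorem symmetrization_eq_zero {i : Fin k} (h : ∀ σ : Perm (Fin k), F (x ∘ σ) (σ.symm i) = 0) :
    symmetrization F x i = 0 := by
  simp [symmetrization, h]

theorem exists_symmetrization_eq_comp
    (h : ∀ (σ : Perm (Fin k)) i, x (σ i) = 0 → F (x ∘ σ) i = 0) :
    ∃ φ : ℝ → ℝ, φ 0 = 0 ∧ symmetrization F x = φ ∘ x := by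
  refine ⟨extend x (symmetrization F x) 0, ?_, funext fun i =>
    ((symmetrization_factorsThrough F x).extend_apply 0 i).symm⟩
  by_cases h0 : ∃ i, x i = 0
  · obtain ⟨i, hi⟩ := h0
    calc extend x (symmetrization F x) 0 0
        = extend x (symmetrization F x) 0 (x i) := by rw [hi]
      _ = symmetrization F x i := (symmetrization_factorsThrough F x).extend_apply 0 i
      _ = 0 := symmetrization_eq_zero fun σ => h σ _ (by rw [apply_symm_apply, hi])
  · exact extend_apply' _ _ _ h0

theorem l1Norm_symmetrization (F : (Fin k → ℝ) → Fin k → ℝ) (x : Fin k → ℝ) :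
    l1Norm (symmetrization F x) = (∑ σ : Perm (Fin k), l1Norm (F (x ∘ σ))) / k.factorial :=
  calc l1Norm (symmetrization F x)
      = ∑ i, symmetrization F x i :=
        Finset.sum_congr rfl fun i _ => abs_of_nonneg (by unfold symmetrization; positivity)
    _ = (∑ σ : Perm (Fin k), l1Norm (F (x ∘ σ))) / k.factorial := by
        simp only [symmetrization]
        rw [← Finset.sum_div, sum_sum_abs_apply_symm fun σ => F (x ∘ σ)]

theorem l1Norm_symmetrization_sub_le (F : (Fin k → ℝ) → Fin k → ℝ) (x y : Fin k → ℝ) :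
    l1Norm (symmetrization F x - symmetrization F y) ≤
      (∑ σ : Perm (Fin k), l1Norm (F (x ∘ σ) - F (y ∘ σ))) / k.factorial :=
  calc l1Norm (symmetrization F x - symmetrization F y)
      ≤ ∑ i, (∑ σ : Perm (Fin k), |(F (x ∘ σ) - F (y ∘ σ)) (σ.symm i)|) / k.factorial := by
        refine Finset.sum_le_sum fun i _ => ?_
        rw [Pi.sub_apply, symmetrization, symmetrization, ← sub_div, ← Finset.sum_sub_distrib,
          abs_div, Nat.abs_cast]
        gcongr
        exact (Finset.abs_sum_le_sum_abs _ _).trans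
          (Finset.sum_le_sum fun σ _ => abs_abs_sub_abs_le _ _)
    _ = (∑ σ : Perm (Fin k), l1Norm (F (x ∘ σ) - F (y ∘ σ))) / k.factorial := by
        rw [← Finset.sum_div, sum_sum_abs_apply_symm fun σ => F (x ∘ σ) - F (y ∘ σ)]

theorem exists_l1Norm_symmetrization_sub_le (F : (Fin k → ℝ) → Fin k → ℝ) (x y : Fin k → ℝ) :
    ∃ σ : Perm (Fin k),
      l1Norm (symmetrization F x - symmetrization F y) ≤ l1Norm (F (x ∘ σ) - F (y ∘ σ)) := by
  by_contra! hlt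
  have hsum := Finset.sum_lt_sum_of_nonempty Finset.univ_nonempty fun σ _ => hlt σ
  rw [Finset.sum_const, Finset.card_univ, Fintype.card_perm, Fintype.card_fin, nsmul_eq_mul,
    ← div_lt_iff₀' (by positivity)] at hsum
  exact ((l1Norm_symmetrization_sub_le F x y).trans_lt hsum).false

end symmetrization

/-- The nodes of `n` levels, the level `t < n` having `b ^ t` of them. They index the coordinates of
`levelVector`. -/
abbrev LevelNode (b n : ℕ) : Type := (t : Fin n) × Fin (b ^ (t : ℕ))

namespace LevelNode

variable {b n : ℕ}

theorem sum_level (b n : ℕ) (f : ℕ → ℝ) :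
    ∑ s : LevelNode b n, f s.1 = ∑ t ∈ Finset.range n, (b : ℝ) ^ t * f t := by
  rw [Fintype.sum_sigma, Finset.sum_range]
  simp

theorem card (b n : ℕ) : Fintype.card (LevelNode b n) = ∑ t ∈ Finset.range n, b ^ t := by
  simp [LevelNode, Finset.sum_range]

/-- The only node of level `0`. -/
def root (b n : ℕ) : LevelNode b (n + 1) :=
  ⟨0, 0, by simp⟩

/-- The inclusion of the first `n` levels in the first `n + 1`. -/
def castSucc : LevelNode b n → LevelNode b (n + 1) :=
  Sigma.map Fin.castSucc fun _ => id

/-- An injection of each level into the next one. -/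
def succ (hb : 1 ≤ b) : LevelNode b n → LevelNode b (n + 1) :=
  Sigma.map Fin.succ fun t => Fin.castLE (Nat.pow_le_pow_right hb (Nat.le_succ t))

theorem castSucc_injective : Injective (castSucc : LevelNode b n → LevelNode b (n + 1)) :=
  (Fin.castSucc_injective n).sigma_map fun _ => injective_id

theorem succ_injective (hb : 1 ≤ b) : Injective (succ hb : LevelNode b n → LevelNode b (n + 1)) :=
  (Fin.succ_injective n).sigma_map fun _ => Fin.castLE_injective _

theorem sumElim_castSucc_succ_injective (hb : 1 ≤ b) {P : LevelNode b n → Prop}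
    (hP : ∀ s s', P s → P s' → (s.1 : ℕ) ≠ s'.1 + 1) :
    Injective (Sum.elim (fun s : Subtype P => castSucc s.1) fun s : Subtype P => succ hb s.1) := by
  refine (castSucc_injective.comp Subtype.val_injective).sumElim
    ((succ_injective hb).comp Subtype.val_injective) fun s s' h => hP s s' s.2 s'.2 ?_
  simpa [castSucc, succ, Sigma.map] using congrArg (fun r => (r.1 : ℕ)) h

end LevelNode

open LevelNode

/-- The vector with value `1 - t / d` at the positions that `e` assigns to the nodes of level `t`,
and `0` at all others. -/
noncomputable def levelVector {b d k : ℕ} (e : LevelNode b (d + 1) ↪ Fin k) : Fin k → ℝ :=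
  extend e (fun s => 1 - (s.1 : ℝ) / d) 0

section levelVector

variable {b d k : ℕ} (e : LevelNode b (d + 1) ↪ Fin k)

theorem levelVector_apply (s : LevelNode b (d + 1)) : levelVector e (e s) = 1 - (s.1 : ℝ) / d :=
  e.injective.extend_apply _ _ s

theorem levelVector_of_notMem_range {i : Fin k} (hi : i ∉ Set.range e) : levelVector e i = 0 :=
  extend_apply' _ _ i hi

theorem abs_levelVector_castSucc_sub_succ (hb : 1 ≤ b) (s : LevelNode b d) :
    |levelVector e (e s.castSucc) - levelVector e (e (s.succ hb))| = 1 / d := by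
  have hsub : (1 - (s.1 : ℝ) / d) - (1 - ((s.1 : ℝ) + 1) / d) = 1 / d := by ring
  simp only [levelVector_apply, LevelNode.castSucc, LevelNode.succ, Sigma.map, Fin.val_castSucc,
    Fin.val_succ, Nat.cast_add, Nat.cast_one, hsub]
  exact abs_of_nonneg (by positivity)

theorem supNorm_levelVector : supNorm (levelVector e) = 1 := by
  have hroot : levelVector e (e (root b d)) = 1 := by simp [levelVector_apply, root]
  have : Nonempty (Fin k) := ⟨e (root b d)⟩
  refine le_antisymm (ciSup_le fun i => ?_) ?_
  · by_cases hi : i ∈ Set.range e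
    · obtain ⟨s, rfl⟩ := hi
      have hle : (s.1 : ℝ) / d ≤ 1 :=
        div_le_one_of_le₀ (mod_cast Fin.is_le s.1) (Nat.cast_nonneg d)
      rw [levelVector_apply, abs_of_nonneg (sub_nonneg.2 hle)]
      exact sub_le_self _ (by positivity)
    · simp [levelVector_of_notMem_range e hi]
  · calc (1 : ℝ) = |levelVector e (e (root b d))| := by rw [hroot, abs_one]
      _ ≤ supNorm (levelVector e) :=
        le_ciSup (f := fun i => |levelVector e i|) (Set.finite_range _).bddAbove (e (root b d))

theorem l1Norm_comp_levelVector (hd : d ≠ 0) {φ : ℝ → ℝ} (hφ : φ 0 = 0) :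
    l1Norm (φ ∘ levelVector e) = ∑ t ∈ Finset.range d, (b : ℝ) ^ t * |φ (1 - t / d)| :=
  calc l1Norm (φ ∘ levelVector e)
      = ∑ s : LevelNode b (d + 1), |φ (1 - (s.1 : ℝ) / d)| := by
        refine (Fintype.sum_of_injective e e.injective _ _ (fun i hi => ?_) fun s => ?_).symm
        · simp [levelVector_of_notMem_range e hi, hφ]
        · rw [comp_apply, levelVector_apply]
    _ = ∑ t ∈ Finset.range d, (b : ℝ) ^ t * |φ (1 - t / d)| := by
        rw [sum_level b (d + 1) fun t => |φ (1 - t / d)|, Finset.sum_range_succ,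
          div_self (Nat.cast_ne_zero.2 hd), sub_self, hφ, abs_zero, mul_zero, add_zero]

theorem exists_perm_two_mul_sum_abs_sub_abs_le (hb : 1 ≤ b) {P : LevelNode b d → Prop}
    [DecidablePred P] (hP : ∀ s s', P s → P s' → (s.1 : ℕ) ≠ s'.1 + 1) (φ : ℝ → ℝ) :
    ∃ π : Perm (Fin k), supNorm (levelVector e - levelVector e ∘ π) ≤ 1 / d ∧
      2 * ∑ s : Subtype P, (|φ (1 - (s.1.1 : ℝ) / d)| - |φ (1 - ((s.1.1 + 1 : ℕ) : ℝ) / d)|) ≤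
        l1Norm (φ ∘ levelVector e - φ ∘ levelVector e ∘ π) := by
  have : Nonempty (Fin k) := ⟨e (root b d)⟩
  have huv := e.injective.comp (sumElim_castSucc_succ_injective hb hP)
  rw [Sum.comp_elim] at huv
  obtain ⟨π, hπ, hfix⟩ := exists_perm_exchange huv
  refine ⟨π, ciSup_le <| abs_sub_le_of_exchange hπ hfix (by positivity) fun s =>
    (abs_levelVector_castSucc_sub_succ e hb s.1).le,
    le_trans ?_ (two_mul_sum_abs_sub_le_of_exchange huv hπ (φ ∘ levelVector e))⟩
  gcongr with s
  simpa [levelVector_apply, LevelNode.castSucc, LevelNode.succ, Sigma.map] using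
    abs_sub_abs_le_abs_sub (φ (1 - (s.1.1 : ℝ) / d)) (φ (1 - ((s.1.1 : ℝ) + 1) / d))

end levelVector

theorem one_sub_one_div_mul_sum_pow_mul_le {b : ℝ} (hb : 0 < b) {m : ℕ → ℝ} (hm : 0 ≤ m 0) {d : ℕ}
    (hmd : m d = 0) :
    (1 - 1 / b) * ∑ t ∈ Finset.range d, b ^ t * m t ≤
      ∑ t ∈ Finset.range d, b ^ t * (m t - m (t + 1)) := by
  have hshift : b * ∑ t ∈ Finset.range d, b ^ t * m (t + 1) + m 0 =
      ∑ t ∈ Finset.range d, b ^ t * m t := by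
    have h := Finset.sum_range_succ' (fun t => b ^ t * m t) d
    rw [Finset.sum_range_succ, hmd] at h
    simpa [Finset.mul_sum, pow_succ', mul_assoc] using h.symm
  simp only [mul_sub, Finset.sum_sub_distrib, sub_mul, one_mul]
  gcongr
  rw [div_mul_eq_mul_div, one_mul, le_div_iff₀' hb]
  linarith

theorem exists_perm_one_sub_one_div_mul_l1Norm_le {b d k : ℕ} (hb : 1 ≤ b) (hd : d ≠ 0)
    (e : LevelNode b (d + 1) ↪ Fin k) {φ : ℝ → ℝ} (hφ : φ 0 = 0) :
    ∃ π : Perm (Fin k), supNorm (levelVector e - levelVector e ∘ π) ≤ 1 / d ∧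
      (1 - 1 / b) * l1Norm (φ ∘ levelVector e) ≤
        l1Norm (φ ∘ levelVector e - φ ∘ levelVector e ∘ π) := by
  set m : ℕ → ℝ := fun t => |φ (1 - t / d)|
  have hmd : m d = 0 := by simp [m, hd, hφ]
  have hdrop : (1 - 1 / b) * l1Norm (φ ∘ levelVector e) ≤
      ∑ s : LevelNode b d, (m s.1 - m (s.1 + 1)) := by
    rw [l1Norm_comp_levelVector e hd hφ, sum_level b d fun t => m t - m (t + 1)]
    exact one_sub_one_div_mul_sum_pow_mul_le (by positivity) (abs_nonneg _) hmd
  rw [← Fintype.sum_subtype_add_sum_subtype fun s : LevelNode b d => Even (s.1 : ℕ)] at hdrop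
  obtain ⟨π, hdist, hle⟩ := exists_perm_two_mul_sum_abs_sub_abs_le e hb
    (P := fun s => Even (s.1 : ℕ)) (by grind) φ
  obtain ⟨π', hdist', hle'⟩ := exists_perm_two_mul_sum_abs_sub_abs_le e hb
    (P := fun s => ¬ Even (s.1 : ℕ)) (by grind) φ
  rcases le_total (∑ s : {s : LevelNode b d // ¬ Even (s.1 : ℕ)}, (m s.1.1 - m (s.1.1 + 1)))
    (∑ s : {s : LevelNode b d // Even (s.1 : ℕ)}, (m s.1.1 - m (s.1.1 + 1))) with hodd_le | heven_le
  · exact ⟨π, hdist, by linarith⟩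
  · exact ⟨π', hdist', by linarith⟩

theorem stmt_11_general (d : ℕ) (hd : 1 ≤ d) (b : ℕ) (hb : 1 ≤ b) (k : ℕ)
    (hk : ∑ t ∈ Finset.range (d + 1), b ^ t ≤ k) (F : (Fin k → ℝ) → (Fin k → ℝ))
    (hFmaps : ∀ x, supNorm x = 1 → l1Norm (F x) = 1)
    (hsupp : ∀ x, supNorm x = 1 → ∀ i, F x i ≠ 0 → x i ≠ 0) :
    ∃ x y : Fin k → ℝ, supNorm x = 1 ∧ supNorm y = 1 ∧
      supNorm (x - y) ≤ 1 / (d : ℝ) ∧ 1 - 1 / (b : ℝ) ≤ l1Norm (F x - F y) := by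
  obtain ⟨e⟩ : Nonempty (LevelNode b (d + 1) ↪ Fin k) :=
    Embedding.nonempty_of_card_le (by rwa [LevelNode.card, Fintype.card_fin])
  set x := levelVector e
  have hsphere (σ : Perm (Fin k)) : supNorm (x ∘ σ) = 1 := by
    rw [supNorm_comp_perm, supNorm_levelVector]
  obtain ⟨φ, hφ, hFφ⟩ := exists_symmetrization_eq_comp fun σ i hi =>
    not_not.1 fun h => hsupp (x ∘ σ) (hsphere σ) i h hi
  have hmass : l1Norm (φ ∘ x) = 1 := by
    rw [← hFφ, l1Norm_symmetrization]
    simp [hFmaps _ (hsphere _), Fintype.card_perm, Nat.factorial_ne_zero]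
  obtain ⟨π, hdist, hle⟩ := exists_perm_one_sub_one_div_mul_l1Norm_le hb (by omega) e hφ
  rw [hmass, mul_one, ← comp_assoc, ← hFφ, ← symmetrization_comp_perm] at hle
  obtain ⟨σ, hσ⟩ := exists_l1Norm_symmetrization_sub_le F x (x ∘ π)
  refine ⟨x ∘ σ, x ∘ π ∘ σ, hsphere σ, hsphere (π * σ), ?_, hle.trans hσ⟩
  exact (supNorm_comp_perm (x - x ∘ π) σ).trans_le hdist

theorem sum_two_pow_le {d : ℕ} (hd : 1 ≤ d) :
    ∑ t ∈ Finset.range (d + 1), 2 ^ t ≤ 19 ^ (2 * d - 1) + 1 :=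
  calc ∑ t ∈ Finset.range (d + 1), 2 ^ t
      ≤ 2 ^ (d + 1) := (Nat.geomSum_lt le_rfl fun _ => Finset.mem_range.1).le
    _ ≤ 2 ^ (2 * (2 * d - 1)) := Nat.pow_le_pow_right two_pos (by omega)
    _ = 4 ^ (2 * d - 1) := pow_mul 2 2 _
    _ ≤ 19 ^ (2 * d - 1) := Nat.pow_le_pow_left (by norm_num) _
    _ ≤ 19 ^ (2 * d - 1) + 1 := Nat.le_succ _

/-- Theorem 4.4 of the paper: for `d ≥ 1`, `k ≥ 19^(2d-1) + 1` and any
support preserving map `F : S_{ℓ∞^k} → S_{ℓ1^k}` (not assumed continuous or injective),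
there are `x, y` on the sphere with `‖x - y‖_∞ ≤ 1/d` and `‖F x - F y‖_1 ≥ 1/2`. -/
theorem stmt_11 (d : ℕ) (hd : 1 ≤ d) (k : ℕ) (hk : 19 ^ (2 * d - 1) + 1 ≤ k)
    (F : (Fin k → ℝ) → (Fin k → ℝ))
    (hFmaps : ∀ x, supNorm x = 1 → l1Norm (F x) = 1)
    (hsupp : ∀ x, supNorm x = 1 → ∀ i, (F x i ≠ 0 ↔ x i ≠ 0)) :
    ∃ x y : Fin k → ℝ, supNorm x = 1 ∧ supNorm y = 1 ∧
      supNorm (x - y) ≤ 1 / (d : ℝ) ∧ 1 / 2 ≤ l1Norm (F x - F y) := by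
  obtain ⟨x, y, hx, hy, hxy, hF⟩ := stmt_11_general d hd 2 one_le_two k
    ((sum_two_pow_le hd).trans hk) F hFmaps fun x hx i => (hsupp x hx i).1
  exact ⟨x, y, hx, hy, hxy, le_trans (by norm_num) hF⟩
end

section
/- Let d ∈ ℕ with d ≥ 1 and 1 ≤ q ≤ p < ∞. Let X be a real normed space and (e_i)_{i≥1} a normalized 1-unconditional sequence in X satisfying lower p and upper q estimates on block sequences with constant one. Let P ⊆ ℕ and M = {k_1 < k_2 < …} ⊆ ℕ satisfy Assumption A(d, 1/2). Then for any k > k_{2d} and any step preserving continuous map F : S_{ℓ∞^k} → S_{X_k} such that F(1,…,1) ≠ F(−1,…,−1), one has ω_F(1/d) ≥ 1/2, i.e., there exist x, y ∈ S_{ℓ∞^k} with ‖x − y‖_∞ ≤ 1/d and ‖F(x) − F(y)‖ ≥ 1/2. -/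
/-- `ψ(k) = ‖∑_{i=1}^k e_i‖`. -/
noncomputable def psi {X : Type*} [NormedAddCommGroup X] (e : ℕ → X) (k : ℕ) : ℝ :=
  ‖∑ i ∈ Finset.Icc 1 k, e i‖

/-- `ψ_P(k) = min(‖∑_{i ≤ k, i ∈ P} e_i‖, ‖∑_{i ≤ k, i ∉ P} e_i‖)`. -/
noncomputable def psiP {X : Type*} [NormedAddCommGroup X] (e : ℕ → X) (P : Set ℕ)
    (k : ℕ) : ℝ :=
  min ‖∑ i ∈ Finset.Icc 1 k, Set.indicator P e i‖
      ‖∑ i ∈ Finset.Icc 1 k, Set.indicator Pᶜ e i‖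

/-!
Group the points of `P` of each block with the points off `P` of the preceding block into levels.
Since `ψ` grows fast, in a vector that is constant on the levels the points off `P` carry little of
the norm, except possibly in the last block; with the roles of `P` and `Pᶜ` exchanged, the points of
`P` carry little. Two paths on the sphere of `ℓ∞^k` from `(1, …, 1)` to `(-1, …, -1)`, the first
constant on the levels of `P` and the second on those of `Pᶜ`, stay at distance at most `1 / d` from
each other. As `F (-1, …, -1) = -F (1, …, 1)`, there is a point of the first path whose image
vanishes on the last block; this image nearly lives on `P`, while the image of the nearby point of
the second path is small on `P`, at least outside the last block. For `d = 1` there may be too few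
blocks for this, but the poles are joined by a chain of three steps of length at most `1`.
-/

open Finset

theorem supNorm_eq_norm {k : ℕ} (x : Fin k → ℝ) : supNorm x = ‖x‖ :=
  le_antisymm (Real.iSup_le (fun i => norm_le_pi_norm x i) (norm_nonneg x))
    ((pi_norm_le_iff_of_nonneg (Real.iSup_nonneg fun i => abs_nonneg (x i))).2
      fun i => le_ciSup (f := fun i => |x i|) (Set.finite_range _).bddAbove i)

section PowerMean

theorem rpow_sum_rpow_le_card_rpow_mul {ι : Type*} (s : Finset ι) {q p : ℝ} (hq : 0 < q)
    (hqp : q ≤ p) {y : ι → ℝ} (hy : ∀ i, 0 ≤ y i) :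
    (∑ i ∈ s, y i ^ q) ^ (1 / q) ≤
      (#s : ℝ) ^ (1 / q - 1 / p) * (∑ i ∈ s, y i ^ p) ^ (1 / p) := by
  have hp : 0 < p := hq.trans_le hqp
  have hyq (i : ι) : 0 ≤ y i ^ q := Real.rpow_nonneg (hy i) q
  have hSq : 0 ≤ ∑ i ∈ s, y i ^ q := sum_nonneg fun i _ => hyq i
  have hSp : 0 ≤ ∑ i ∈ s, y i ^ p := sum_nonneg fun i _ => Real.rpow_nonneg (hy i) p
  have power_mean : (∑ i ∈ s, y i ^ q) ^ (p / q) ≤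
      (#s : ℝ) ^ (p / q - 1) * ∑ i ∈ s, y i ^ p := by
    have h := Real.rpow_sum_le_const_mul_sum_rpow s (fun i => y i ^ q) ((one_le_div hq).2 hqp)
    simpa only [abs_of_nonneg (hyq _), ← Real.rpow_mul (hy _), mul_div_cancel₀ p hq.ne'] using h
  have h := Real.rpow_le_rpow (by positivity) power_mean (z := 1 / p) (by positivity)
  rw [Real.mul_rpow (by positivity) hSp, ← Real.rpow_mul hSq,
    ← Real.rpow_mul (Nat.cast_nonneg _)] at h
  have exponent_left : p / q * (1 / p) = 1 / q := by field_simp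
  have exponent_right : (p / q - 1) * (1 / p) = 1 / q - 1 / p := by field_simp
  rwa [exponent_left, exponent_right] at h

theorem rpow_sum_mul_rpow {ι : Type*} (s : Finset ι) {q r : ℝ} (hq : q ≠ 0) (hr : 0 ≤ r)
    {y : ι → ℝ} (hy : ∀ i, 0 ≤ y i) :
    (∑ i ∈ s, (r * y i) ^ q) ^ (1 / q) = r * (∑ i ∈ s, y i ^ q) ^ (1 / q) := by
  simp only [Real.mul_rpow hr (hy _), ← mul_sum]
  rw [Real.mul_rpow (by positivity) (sum_nonneg fun i _ => Real.rpow_nonneg (hy i) q),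
    ← Real.rpow_mul hr, mul_one_div_cancel hq, Real.rpow_one]

end PowerMean

theorem sum_range_sum_Ioc {M : Type*} [AddCommMonoid M] {K : ℕ → ℕ} (hK : Monotone K)
    (f : ℕ → M) (n : ℕ) :
    ∑ j ∈ range n, ∑ m ∈ Ioc (K j) (K (j + 1)), f m = ∑ m ∈ Ioc (K 0) (K n), f m := by
  induction n with
  | zero => simp
  | succ n ih =>
    rw [sum_range_succ, ih, sum_Ioc_consecutive f (hK n.zero_le) (hK n.le_succ)]

section Unconditional

variable {X : Type*} [NormedAddCommGroup X] [NormedSpace ℝ X]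

/-- The family `e` is `1`-unconditional. -/
def IsOneUnconditional {ι : Type*} (e : ι → X) : Prop :=
  ∀ (s : Finset ι) (a b : ι → ℝ), (∀ i ∈ s, |a i| ≤ |b i|) →
    ‖∑ i ∈ s, a i • e i‖ ≤ ‖∑ i ∈ s, b i • e i‖

namespace IsOneUnconditional

variable {ι : Type*} {e : ι → X} {s t : Finset ι}

theorem norm_sum_indicator_smul_le (he : IsOneUnconditional e) (hst : s ⊆ t) (Q : Set ι)
    (a : ι → ℝ) :
    ‖∑ i ∈ s, Q.indicator (fun i => a i • e i) i‖ ≤ ‖∑ i ∈ t, a i • e i‖ := by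
  classical
  have hterm (i : ι) : Set.indicator (s ∩ Q) a i • e i =
      if i ∈ s then Q.indicator (fun i => a i • e i) i else 0 := by
    by_cases his : i ∈ s <;> by_cases hiQ : i ∈ Q <;> simp [his, hiQ]
  calc ‖∑ i ∈ s, Q.indicator (fun i => a i • e i) i‖
      = ‖∑ i ∈ t, Set.indicator (s ∩ Q) a i • e i‖ := by
        simp only [hterm, sum_ite_mem, inter_eq_right.2 hst]
    _ ≤ ‖∑ i ∈ t, a i • e i‖ := he t _ _ fun i _ => by
        by_cases hi : i ∈ (s ∩ Q : Set ι) <;> simp [hi]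

theorem norm_sum_indicator_le (he : IsOneUnconditional e) (hst : s ⊆ t) (Q : Set ι) :
    ‖∑ i ∈ s, Q.indicator e i‖ ≤ ‖∑ i ∈ t, e i‖ := by
  simpa only [one_smul] using he.norm_sum_indicator_smul_le hst Q fun _ => 1

theorem norm_smul_le_norm_sum (he : IsOneUnconditional e) {i : ι} (hi : i ∈ t) (a : ι → ℝ) :
    ‖a i • e i‖ ≤ ‖∑ j ∈ t, a j • e j‖ := by
  simpa using he.norm_sum_indicator_smul_le (singleton_subset_iff.2 hi) Set.univ a

/-- The right-hand side is small if `a` nearly lives on `P` and `b` nearly lives off `P`, while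
`a - b` is small on `P`. -/
theorem norm_sum_le_norm_sub_add (he : IsOneUnconditional e) (hst : s ⊆ t) (P : Set ι)
    {a : ι → ℝ} (b : ι → ℝ) (ha : ∀ i ∈ t, i ∉ s → a i = 0) :
    ‖∑ i ∈ t, a i • e i‖ ≤ ‖∑ i ∈ t, a i • e i - ∑ i ∈ t, b i • e i‖ +
      ‖∑ i ∈ s, Pᶜ.indicator (fun i => a i • e i) i‖ +
      ‖∑ i ∈ s, P.indicator (fun i => b i • e i) i‖ := by
  have decomposition : ∑ i ∈ t, a i • e i =
      ∑ i ∈ s, P.indicator (fun i => (a i - b i) • e i) i +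
        ∑ i ∈ s, Pᶜ.indicator (fun i => a i • e i) i +
        ∑ i ∈ s, P.indicator (fun i => b i • e i) i := by
    rw [← sum_subset hst fun i hi his => by rw [ha i hi his, zero_smul], ← sum_add_distrib,
      ← sum_add_distrib]
    refine sum_congr rfl fun i _ => ?_
    by_cases hi : i ∈ P <;> simp [hi, sub_smul]
  have on_P : ‖∑ i ∈ s, P.indicator (fun i => (a i - b i) • e i) i‖ ≤
      ‖∑ i ∈ t, a i • e i - ∑ i ∈ t, b i • e i‖ := by
    simpa only [sub_smul, sum_sub_distrib] using
      he.norm_sum_indicator_smul_le hst P fun i => a i - b i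
  conv_lhs => rw [decomposition]
  exact norm_add₃_le.trans (by gcongr)

end IsOneUnconditional

end Unconditional

section BlockEstimates

variable {X : Type*} [NormedAddCommGroup X] [NormedSpace ℝ X] {e : ℕ → X}

/-- The first `N` terms of `x` form a block sequence of `e`. -/
def IsBlockSequence (e : ℕ → X) (N : ℕ) (x : ℕ → X) : Prop :=
  ∃ s : ℕ → ℕ, (∀ i, i < N → s i < s (i + 1)) ∧
    ∀ i, i < N → x i ∈ Submodule.span ℝ (e '' {j | s i ≤ j ∧ j < s (i + 1)})

/-- The sequence `e` satisfies lower `p` and upper `q` estimates on block sequences, with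
constant one. -/
def HasBlockEstimates (e : ℕ → X) (q p : ℝ) : Prop :=
  ∀ (N : ℕ) (x : ℕ → X), IsBlockSequence e N x →
    (∑ i ∈ range N, ‖x i‖ ^ p) ^ (1 / p) ≤ ‖∑ i ∈ range N, x i‖ ∧
      ‖∑ i ∈ range N, x i‖ ≤ (∑ i ∈ range N, ‖x i‖ ^ q) ^ (1 / q)

theorem isBlockSequence_smul_sum_indicator {K : ℕ → ℕ} (hK : StrictMono K) (Q : Set ℕ)
    (a : ℕ → ℝ) (N : ℕ) :
    IsBlockSequence e N fun j => a j • ∑ m ∈ Ioc (K j) (K (j + 1)), Q.indicator e m := by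
  refine ⟨fun j => K j + 1, fun j _ => Nat.succ_lt_succ (hK j.lt_succ_self), fun j _ =>
    Submodule.smul_mem _ _ (Submodule.sum_mem _ fun m hm => ?_)⟩
  rw [mem_Ioc] at hm
  by_cases hmQ : m ∈ Q
  · rw [Set.indicator_of_mem hmQ]
    exact Submodule.subset_span ⟨m, ⟨hm.1, Nat.lt_succ_of_le hm.2⟩, rfl⟩
  · rw [Set.indicator_of_notMem hmQ]
    exact Submodule.zero_mem _

theorem HasBlockEstimates.norm_sum_le_of_forall_norm_le {q p : ℝ} (he : HasBlockEstimates e q p)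
    (hq : 0 < q) (hqp : q ≤ p) {N : ℕ} {x y : ℕ → X} (hx : IsBlockSequence e N x)
    (hy : IsBlockSequence e N y) {r : ℝ} (hr : 0 ≤ r) (hxy : ∀ j < N, ‖x j‖ ≤ r * ‖y j‖) :
    ‖∑ j ∈ range N, x j‖ ≤ r * (N : ℝ) ^ (1 / q - 1 / p) * ‖∑ j ∈ range N, y j‖ :=
  calc ‖∑ j ∈ range N, x j‖
      ≤ (∑ j ∈ range N, ‖x j‖ ^ q) ^ (1 / q) := (he N x hx).2
    _ ≤ (∑ j ∈ range N, (r * ‖y j‖) ^ q) ^ (1 / q) := by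
        gcongr with j hj
        exact hxy j (mem_range.1 hj)
    _ = r * (∑ j ∈ range N, ‖y j‖ ^ q) ^ (1 / q) :=
        rpow_sum_mul_rpow _ hq.ne' hr fun _ => norm_nonneg _
    _ ≤ r * ((N : ℝ) ^ (1 / q - 1 / p) * (∑ j ∈ range N, ‖y j‖ ^ p) ^ (1 / p)) := by
        gcongr
        simpa only [card_range] using
          rpow_sum_rpow_le_card_rpow_mul (range N) hq hqp fun j => norm_nonneg (y j)
    _ ≤ r * ((N : ℝ) ^ (1 / q - 1 / p) * ‖∑ j ∈ range N, y j‖) := by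
        gcongr
        exact (he N y hy).1
    _ = r * (N : ℝ) ^ (1 / q - 1 / p) * ‖∑ j ∈ range N, y j‖ := (mul_assoc _ _ _).symm

end BlockEstimates

section Level

variable {K : ℕ → ℕ} {d j m : ℕ} {Q : Set ℕ}

/-- The index of the block `(K j, K (j + 1)]` containing `m`, all the blocks from the `d`-th on
being merged. -/
def blockIndex (K : ℕ → ℕ) (d m : ℕ) : ℕ :=
  Nat.findGreatest (fun j => K j < m) d

theorem blockIndex_le : blockIndex K d m ≤ d :=
  Nat.findGreatest_le d

theorem blockIndex_eq (hK : Monotone K) (hj : j ≤ d) (hm : m ∈ Ioc (K j) (K (j + 1))) :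
    blockIndex K d m = j := by
  rw [mem_Ioc] at hm
  exact Nat.findGreatest_eq_iff.2
    ⟨hj, fun _ => hm.1, fun i hi _ => (hm.2.trans (hK hi)).not_gt⟩

theorem blockIndex_eq_of_lt (hm : K d < m) : blockIndex K d m = d :=
  Nat.findGreatest_eq hm

/-- The level of `m`: points of `Q` get the index of their block, the other points that of the next
block, the last level being `d`. -/
noncomputable def level (K : ℕ → ℕ) (d : ℕ) (Q : Set ℕ) (m : ℕ) : ℕ :=
  min (blockIndex K d m + Qᶜ.indicator 1 m) d

theorem level_le : level K d Q m ≤ d :=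
  min_le_right _ _

theorem level_eq_of_lt (hm : K d < m) : level K d Q m = d := by
  simp [level, blockIndex_eq_of_lt hm]

theorem level_eq_of_mem (hK : Monotone K) (hj : j ≤ d) (hm : m ∈ Ioc (K j) (K (j + 1)))
    (hmQ : m ∈ Q) : level K d Q m = j := by
  simp [level, blockIndex_eq hK hj hm, hmQ, hj]

theorem level_eq_of_notMem (hK : Monotone K) (hj : j < d) (hm : m ∈ Ioc (K j) (K (j + 1)))
    (hmQ : m ∉ Q) : level K d Q m = j + 1 := by
  simpa [level, blockIndex_eq hK hj.le hm, hmQ] using hj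

end Level

section Height

variable {d j : ℕ}

/-- The alternating heights of the `d + 1` levels: consecutive levels have heights of opposite
signs and almost equal absolute values. -/
noncomputable def height (d j : ℕ) : ℝ :=
  (-1) ^ j * (d + 1 / 2 - j)

theorem abs_height_le (hj : j ≤ d) : |height d j| ≤ d + 1 / 2 := by
  have hj' : (j : ℝ) ≤ d := mod_cast hj
  rw [height, abs_mul, abs_neg_one_pow, one_mul, abs_le]
  constructor <;> linarith [j.cast_nonneg (α := ℝ)]

theorem abs_height_add_height_succ : |height d j + height d (j + 1)| = 1 := by
  have h : height d j + height d (j + 1) = (-1) ^ j := by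
    rw [height, height, pow_succ]
    push_cast
    ring
  rw [h, abs_neg_one_pow]

theorem abs_height_last_add_self : |height d d + height d d| = 1 := by
  have h : height d d + height d d = (-1) ^ d := by
    rw [height]
    ring
  rw [h, abs_neg_one_pow]

theorem abs_height_level_add_height_level_compl (K : ℕ → ℕ) (d : ℕ) (P : Set ℕ) (m : ℕ) :
    |height d (level K d P m) + height d (level K d Pᶜ m)| = 1 := by
  rcases (blockIndex_le (K := K) (d := d) (m := m)).lt_or_eq with h | h
  · have hsucc : min (blockIndex K d m + 1) d = blockIndex K d m + 1 := min_eq_left h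
    by_cases hm : m ∈ P
    · simpa [level, hm, hsucc, h.le] using abs_height_add_height_succ
    · simpa [level, hm, hsucc, h.le, add_comm] using
        abs_height_add_height_succ (d := d) (j := blockIndex K d m)
  · simpa [level, h] using abs_height_last_add_self

end Height

section Zigzag

variable {K : ℕ → ℕ} {d k : ℕ} {Q : Set ℕ} {t : ℝ}

/-- A path in the unit sphere of `ℓ∞^k` whose coordinates depend only on the level. Coordinates are
indexed from `0`, levels are attached to the points `1, …, k`. -/
noncomputable def zigzag (K : ℕ → ℕ) (d : ℕ) (Q : Set ℕ) (k : ℕ) (t : ℝ) : Fin k → ℝ :=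
  fun i => max (-1) (min 1 ((height d (level K d Q (i + 1)) + t) / d))

theorem continuous_zigzag : Continuous (zigzag K d Q k) := by
  unfold zigzag
  fun_prop

theorem zigzag_of_le (hd : 0 < d) (ht : 2 * d + 1 ≤ t) : zigzag K d Q k t = 1 := by
  ext i
  have h := (abs_le.1 (abs_height_le (level_le (K := K) (d := d) (Q := Q) (m := i + 1)))).1
  have hge : 1 ≤ (height d (level K d Q (i + 1)) + t) / d := by
    rw [one_le_div (by positivity)]
    linarith
  simp [zigzag, hge]

theorem zigzag_of_ge (hd : 0 < d) (ht : t ≤ -(2 * d + 1)) : zigzag K d Q k t = -1 := by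
  ext i
  have h := (abs_le.1 (abs_height_le (level_le (K := K) (d := d) (Q := Q) (m := i + 1)))).2
  have hle : (height d (level K d Q (i + 1)) + t) / d ≤ -1 := by
    rw [div_le_iff₀ (by positivity)]
    linarith
  simp only [zigzag, max_eq_left (min_le_of_right_le hle), Pi.neg_apply, Pi.one_apply]

theorem pi_norm_eq_one_of_abs_apply_eq_one {ι : Type*} [Fintype ι] {x : ι → ℝ}
    (hx : ∀ i, |x i| ≤ 1) {i : ι} (hi : |x i| = 1) : ‖x‖ = 1 :=
  le_antisymm ((pi_norm_le_iff_of_nonneg zero_le_one).2 hx) (hi ▸ norm_le_pi_norm x i)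

theorem abs_zigzag_le (i : Fin k) : |zigzag K d Q k t i| ≤ 1 :=
  abs_le.2 ⟨le_max_left _ _, max_le (by norm_num) (min_le_left _ _)⟩

/-- Level `0` is at `1` when `-1 / 2 ≤ t`, and level `1` is at `-1` when `t ≤ -1 / 2`. -/
theorem norm_zigzag (hd : 0 < d) (hK : Monotone K) (hK0 : K 0 = 0) (hKk : K 1 ≤ k)
    (hQ : ∃ m ∈ Q, m ∈ Set.Ioc 0 (K 1)) (hQc : ∃ m ∉ Q, m ∈ Set.Ioc 0 (K 1)) :
    ‖zigzag K d Q k t‖ = 1 := by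
  have hd' : (0 : ℝ) < d := by positivity
  rcases le_total (-1 / 2) t with ht | ht
  · obtain ⟨m, hmQ, hm0, hm1⟩ := hQ
    have hlevel : level K d Q m = 0 :=
      level_eq_of_mem hK hd.le (mem_Ioc.2 ⟨hK0.symm ▸ hm0, hm1⟩) hmQ
    refine pi_norm_eq_one_of_abs_apply_eq_one abs_zigzag_le (i := ⟨m - 1, by omega⟩) ?_
    have hge : 1 ≤ (height d 0 + t) / d := by
      rw [one_le_div hd', height]
      push_cast
      linarith
    simp [zigzag, Nat.sub_add_cancel hm0, hlevel, hge]
  · obtain ⟨m, hmQ, hm0, hm1⟩ := hQc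
    have hlevel : level K d Q m = 1 :=
      level_eq_of_notMem hK hd (mem_Ioc.2 ⟨hK0.symm ▸ hm0, hm1⟩) hmQ
    refine pi_norm_eq_one_of_abs_apply_eq_one abs_zigzag_le (i := ⟨m - 1, by omega⟩) ?_
    have hle : (height d 1 + t) / d ≤ -1 := by
      rw [div_le_iff₀ hd', height]
      push_cast
      linarith
    simp only [zigzag, Nat.sub_add_cancel hm0, hlevel, max_eq_left (min_le_of_right_le hle),
      abs_neg, abs_one]

theorem abs_max_min_add_max_min_le (a b : ℝ) :
    |max (-1) (min 1 a) + max (-1) (min 1 b)| ≤ |a + b| := by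
  grind

theorem norm_zigzag_add_zigzag_compl_le (K : ℕ → ℕ) (d : ℕ) (P : Set ℕ) (k : ℕ) (t : ℝ) :
    ‖zigzag K d P k t + zigzag K d Pᶜ k (-t)‖ ≤ 1 / d := by
  refine (pi_norm_le_iff_of_nonneg (by positivity)).2 fun i =>
    (abs_max_min_add_max_min_le _ _).trans_eq ?_
  rw [← add_div, add_add_add_comm, add_neg_cancel, add_zero, abs_div, Nat.abs_cast,
    abs_height_level_add_height_level_compl]

end Zigzag

section Concentration

variable {X : Type*} [NormedAddCommGroup X] [NormedSpace ℝ X] {e : ℕ → X} {K : ℕ → ℕ} {d k : ℕ}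

/-- Vectors whose coefficients depend only on the level are, outside the last block, supported on
`Q` up to a proportion `δ` of their norm. -/
def IsConcentrated (e : ℕ → X) (K : ℕ → ℕ) (d k : ℕ) (Q : Set ℕ) (δ : ℝ) : Prop :=
  ∀ c : ℕ → ℝ,
    ‖∑ m ∈ Ioc 0 (K d), Qᶜ.indicator (fun m => c (level K d Q m) • e m) m‖ ≤
      δ * ‖∑ m ∈ Ioc 0 k, c (level K d Q m) • e m‖

theorem sum_Ioc_indicator_smul_level_of_notMem (hK : Monotone K) (hK0 : K 0 = 0) (Q : Set ℕ)
    (c : ℕ → ℝ) :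
    ∑ m ∈ Ioc 0 (K d), Qᶜ.indicator (fun m => c (level K d Q m) • e m) m =
      ∑ j ∈ range d, c (j + 1) • ∑ m ∈ Ioc (K j) (K (j + 1)), Qᶜ.indicator e m := by
  rw [← hK0, ← sum_range_sum_Ioc hK]
  refine sum_congr rfl fun j hj => ?_
  rw [smul_sum]
  refine sum_congr rfl fun m hm => ?_
  by_cases hmQ : m ∈ Q
  · simp [hmQ]
  · simp [hmQ, level_eq_of_notMem hK (mem_range.1 hj) hm hmQ]

theorem sum_Ioc_indicator_smul_level_of_mem (hK : Monotone K) (Q : Set ℕ) (c : ℕ → ℝ) :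
    ∑ m ∈ Ioc (K 1) (K (d + 1)), Q.indicator (fun m => c (level K d Q m) • e m) m =
      ∑ j ∈ range d, c (j + 1) • ∑ m ∈ Ioc (K (j + 1)) (K (j + 2)), Q.indicator e m := by
  have hKsucc : Monotone fun j => K (j + 1) := fun _ _ hij => hK (Nat.succ_le_succ hij)
  rw [← sum_range_sum_Ioc hKsucc]
  refine sum_congr rfl fun j hj => ?_
  rw [smul_sum]
  refine sum_congr rfl fun m hm => ?_
  by_cases hmQ : m ∈ Q
  · simp [hmQ, level_eq_of_mem hK (mem_range.1 hj) hm hmQ]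
  · simp [hmQ]

/-- Level `j + 1` consists of the points off `Q` of one block and the points of `Q` of the next
block, where the latter dominate. -/
theorem isConcentrated_of_dominated (he : IsOneUnconditional e) {q p : ℝ}
    (hblock : HasBlockEstimates e q p) (hq : 0 < q) (hqp : q ≤ p) (hK : StrictMono K)
    (hK0 : K 0 = 0) (hKk : K (d + 1) ≤ k) {Q : Set ℕ} {r : ℝ} (hr : 0 ≤ r)
    (hdom : ∀ j < d, ‖∑ m ∈ Ioc (K j) (K (j + 1)), Qᶜ.indicator e m‖ ≤
      r * ‖∑ m ∈ Ioc (K (j + 1)) (K (j + 2)), Q.indicator e m‖) :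
    IsConcentrated e K d k Q (r * (d : ℝ) ^ (1 / q - 1 / p)) := by
  intro c
  have hKsucc : StrictMono fun j => K (j + 1) := fun _ _ hij => hK (Nat.succ_lt_succ hij)
  have hle := hblock.norm_sum_le_of_forall_norm_le hq hqp
    (isBlockSequence_smul_sum_indicator hK Qᶜ (fun j => c (j + 1)) d)
    (isBlockSequence_smul_sum_indicator hKsucc Q (fun j => c (j + 1)) d) hr fun j hj => by
      rw [norm_smul, norm_smul, mul_left_comm]
      gcongr
      exact hdom j hj
  rw [← sum_Ioc_indicator_smul_level_of_notMem hK.monotone hK0,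
    ← sum_Ioc_indicator_smul_level_of_mem hK.monotone] at hle
  refine hle.trans ?_
  gcongr
  exact he.norm_sum_indicator_smul_le (Ioc_subset_Ioc (Nat.zero_le _) hKk) Q _

theorem le_norm_sub_of_isConcentrated (he : IsOneUnconditional e) (hKk : K d ≤ k) {P : Set ℕ}
    {δ : ℝ} (hP : IsConcentrated e K d k P δ) (hPc : IsConcentrated e K d k Pᶜ δ) {c c' : ℕ → ℝ}
    (hcd : c d = 0) (hc : ‖∑ m ∈ Ioc 0 k, c (level K d P m) • e m‖ = 1)
    (hc' : ‖∑ m ∈ Ioc 0 k, c' (level K d Pᶜ m) • e m‖ = 1) :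
    1 - 2 * δ ≤ ‖∑ m ∈ Ioc 0 k, c (level K d P m) • e m -
      ∑ m ∈ Ioc 0 k, c' (level K d Pᶜ m) • e m‖ := by
  have hvanish (m : ℕ) (hm : m ∈ Ioc 0 k) (hmd : m ∉ Ioc 0 (K d)) : c (level K d P m) = 0 := by
    rw [mem_Ioc] at hm hmd
    rw [level_eq_of_lt (by omega), hcd]
  have hsplit := he.norm_sum_le_norm_sub_add (Ioc_subset_Ioc_right hKk) P
    (fun m => c' (level K d Pᶜ m)) hvanish
  have hsmall := hP c
  have hsmall_compl := hPc c'
  rw [compl_compl, hc'] at hsmall_compl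
  rw [hc] at hsplit hsmall
  linarith

end Concentration

section Growth

variable {X : Type*} [NormedAddCommGroup X] {e : ℕ → X} {a b : ℕ}

theorem psi_eq_norm_sum_Ioc (e : ℕ → X) (n : ℕ) : psi e n = ‖∑ i ∈ Ioc 0 n, e i‖ := rfl

theorem psiP_compl (e : ℕ → X) (P : Set ℕ) (n : ℕ) : psiP e Pᶜ n = psiP e P n := by
  rw [psiP, psiP, compl_compl, min_comm]

theorem exists_mem_Ioc_ne_zero_of_growth (hab : a ≤ b) {C : ℝ} (hC : 1 ≤ C)
    (hgrowth : C * psi e a + 1 ≤ psi e b) : ∃ m ∈ Ioc a b, e m ≠ 0 := by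
  by_contra! hzero
  have hψ : psi e b = psi e a := by
    rw [psi_eq_norm_sum_Ioc, psi_eq_norm_sum_Ioc, ← sum_Ioc_consecutive e a.zero_le hab,
      sum_eq_zero hzero, add_zero]
  have hle : 1 * psi e a ≤ C * psi e a := mul_le_mul_of_nonneg_right hC (norm_nonneg _)
  linarith

variable [NormedSpace ℝ X]

theorem IsOneUnconditional.mul_psi_le_norm_sum_indicator (he : IsOneUnconditional e) {C : ℝ}
    {P : Set ℕ} (hab : a ≤ b) (hP : (psi e b - 1) / 2 ≤ psiP e P b)
    (hgrowth : (2 * C + 2) * psi e a + 1 ≤ psi e b) :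
    C * psi e a ≤ ‖∑ m ∈ Ioc a b, P.indicator e m‖ := by
  have hinit : ‖∑ m ∈ Ioc 0 a, P.indicator e m‖ ≤ psi e a :=
    he.norm_sum_indicator_le subset_rfl P
  have hsplit := norm_add_le (∑ m ∈ Ioc 0 a, P.indicator e m) (∑ m ∈ Ioc a b, P.indicator e m)
  rw [sum_Ioc_consecutive _ a.zero_le hab] at hsplit
  have htotal : psiP e P b ≤ ‖∑ m ∈ Ioc 0 b, P.indicator e m‖ := min_le_left _ _
  linarith

theorem isConcentrated_of_growth {K : ℕ → ℕ} {d k : ℕ} (he : IsOneUnconditional e) {q p : ℝ}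
    (hblock : HasBlockEstimates e q p) (hq : 0 < q) (hqp : q ≤ p) (hd : 0 < d)
    (hK : StrictMono K) (hK0 : K 0 = 0) (hKk : K (d + 1) ≤ k) {Q : Set ℕ}
    (hQ : ∀ n, (psi e n - 1) / 2 ≤ psiP e Q n) {ε : ℝ} (hε : 0 < ε)
    (hgrowth : ∀ j < d, (8 * (d : ℝ) ^ (1 / q - 1 / p) / ε + 2) * psi e (K (j + 1)) + 1 ≤
      psi e (K (j + 2))) :
    IsConcentrated e K d k Q (ε / 4) := by
  set D : ℝ := (d : ℝ) ^ (1 / q - 1 / p)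
  have hD0 : 0 < D := by positivity
  have hδ : ε / 4 = ε / (4 * D) * D := by field_simp
  rw [hδ]
  refine isConcentrated_of_dominated he hblock hq hqp hK hK0 hKk (by positivity) fun j hj => ?_
  have hon : 4 * D / ε * psi e (K (j + 1)) ≤
      ‖∑ m ∈ Ioc (K (j + 1)) (K (j + 2)), Q.indicator e m‖ :=
    he.mul_psi_le_norm_sum_indicator (hK.monotone (Nat.le_succ _)) (hQ _) <| by
      convert hgrowth j hj using 4
      ring
  calc ‖∑ m ∈ Ioc (K j) (K (j + 1)), Qᶜ.indicator e m‖
      ≤ psi e (K (j + 1)) := he.norm_sum_indicator_le (Ioc_subset_Ioc_left (Nat.zero_le _)) Qᶜ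
    _ = ε / (4 * D) * (4 * D / ε * psi e (K (j + 1))) := by field_simp
    _ ≤ ε / (4 * D) * ‖∑ m ∈ Ioc (K (j + 1)) (K (j + 2)), Q.indicator e m‖ := by gcongr

end Growth

section Synthesis

variable {X : Type*} [NormedAddCommGroup X] [NormedSpace ℝ X] {e : ℕ → X} {k : ℕ}

/-- The linear map sending the `i`-th unit vector of `ℝ^k` to the `i`-th vector of the sequence
`e 1, …, e k`; coordinates are indexed from `0`. -/
def synthesis (e : ℕ → X) (k : ℕ) : (Fin k → ℝ) →ₗ[ℝ] X :=
  Fintype.linearCombination ℝ fun i : Fin k => e (i + 1)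

theorem synthesis_eq_sum_Ioc {v : Fin k → ℝ} {f : ℕ → ℝ} (h : ∀ i, v i = f (i + 1)) :
    synthesis e k v = ∑ m ∈ Ioc 0 k, f m • e m := by
  simp only [synthesis, Fintype.linearCombination_apply, h]
  rw [Fin.sum_univ_eq_sum_range (fun i => f (i + 1) • e (i + 1)), range_eq_Ico,
    sum_Ico_add' (fun m => f m • e m) 0 k 1]
  rfl

theorem IsOneUnconditional.norm_smul_le_norm_synthesis (he : IsOneUnconditional e)
    (v : Fin k → ℝ) (i : Fin k) : ‖v i • e (i + 1)‖ ≤ ‖synthesis e k v‖ := by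
  have hinj : Function.Injective fun i : Fin k => (i : ℕ) + 1 := fun _ _ h =>
    Fin.ext (Nat.succ_injective h)
  obtain ⟨f, hf⟩ : ∃ f : ℕ → ℝ, ∀ i : Fin k, v i = f (i + 1) :=
    ⟨Function.extend (fun i : Fin k => (i : ℕ) + 1) v 0, fun i => (hinj.extend_apply v 0 i).symm⟩
  rw [synthesis_eq_sum_Ioc hf, hf]
  exact he.norm_smul_le_norm_sum (mem_Ioc.2 ⟨Nat.succ_pos _, i.isLt⟩) f

end Synthesis

section StepPreserving

variable {ι X : Type*} [Fintype ι] [NormedAddCommGroup X] [NormedSpace ℝ X]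
  {F : (ι → ℝ) → ι → ℝ} {L : (ι → ℝ) →ₗ[ℝ] X}

/-- On the unit sphere of `ℓ∞`, equal coordinates of `x` give equal coordinates of `F x`. -/
def StepPreserving (F : (ι → ℝ) → ι → ℝ) : Prop :=
  ∀ x, ‖x‖ = 1 → (F x).FactorsThrough x

namespace StepPreserving

theorem exists_apply_eq (hF : StepPreserving F) {x : ι → ℝ} (hx : ‖x‖ = 1) {κ : Type*}
    {l : ι → κ} (hxl : x.FactorsThrough l) : ∃ c : κ → ℝ, ∀ i, F x i = c (l i) := by
  obtain ⟨c, hc⟩ := (Function.factorsThrough_iff (f := l) (F x)).1 fun _ _ h => hF x hx (hxl h)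
  exact ⟨c, congrFun hc⟩

theorem map_neg_one [Nonempty ι] (hF : StepPreserving F) (hL : ∀ x, ‖x‖ = 1 → ‖L (F x)‖ = 1)
    (hne : L (F 1) ≠ L (F (-1))) : F (-1) = -F 1 := by
  have hconst (x : ι → ℝ) (hx : ‖x‖ = 1) (hxc : x.FactorsThrough fun _ => ()) :
      ∃ c : ℝ, F x = c • (1 : ι → ℝ) := by
    obtain ⟨c, hc⟩ := hF.exists_apply_eq hx hxc
    exact ⟨c (), funext fun i => by simp [hc]⟩
  have hone : ‖(1 : ι → ℝ)‖ = 1 := by simp [Pi.one_def]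
  have hneg_one : ‖(-1 : ι → ℝ)‖ = 1 := by rw [norm_neg, hone]
  obtain ⟨a, ha⟩ := hconst 1 hone fun _ _ _ => rfl
  obtain ⟨b, hb⟩ := hconst (-1) hneg_one fun _ _ _ => rfl
  have hLa : |a| * ‖L 1‖ = 1 := by
    rw [← Real.norm_eq_abs, ← norm_smul, ← map_smul, ← ha, hL 1 hone]
  have hLb : |b| * ‖L 1‖ = 1 := by
    rw [← Real.norm_eq_abs, ← norm_smul, ← map_smul, ← hb, hL (-1) hneg_one]
  have habs : |b| = |a| :=
    mul_right_cancel₀ (right_ne_zero_of_mul_eq_one hLa) (hLb.trans hLa.symm)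
  rcases abs_eq_abs.1 habs with rfl | rfl
  · exact absurd (by rw [ha, hb]) hne
  · rw [hb, ha, neg_smul]

end StepPreserving

theorem exists_map_apply_eq_zero_of_path {γ : ℝ → ι → ℝ} (hneg : F (-1) = -F 1)
    (hcont : ContinuousOn (fun x => L (F x)) {x | ‖x‖ = 1}) {r : ℝ} (hr : 0 < r) {i : ι}
    (hL : ∀ v, r * |v i| ≤ ‖L v‖) (hγ : Continuous γ) (hγ_norm : ∀ t, ‖γ t‖ = 1) {a b : ℝ}
    (ha : γ a = 1) (hb : γ b = -1) : ∃ t, F (γ t) i = 0 := by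
  have hLF : Continuous fun t => L (F (γ t)) := hcont.comp_continuous hγ hγ_norm
  have hcoord : Continuous fun t => F (γ t) i := by
    refine continuous_iff_continuousAt.2 fun s => tendsto_iff_norm_sub_tendsto_zero.2 ?_
    have hlim := (tendsto_iff_norm_sub_tendsto_zero.1 (hLF.tendsto s)).div_const r
    rw [zero_div] at hlim
    refine squeeze_zero (fun _ => norm_nonneg _) (fun t => (le_div_iff₀' hr).2 ?_) hlim
    simpa only [map_sub, Pi.sub_apply, Real.norm_eq_abs] using hL (F (γ t) - F (γ s))
  have hab : F (γ b) i = -F (γ a) i := by rw [ha, hb, hneg, Pi.neg_apply]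
  rcases le_total 0 (F (γ a) i) with h | h
  · exact mem_range_of_exists_le_of_exists_ge hcoord ⟨b, by linarith⟩ ⟨a, h⟩
  · exact mem_range_of_exists_le_of_exists_ge hcoord ⟨a, h⟩ ⟨b, by linarith⟩

theorem exists_two_thirds_le_norm_sub [Nontrivial ι] (hL : ∀ x, ‖x‖ = 1 → ‖L (F x)‖ = 1)
    (hneg : F (-1) = -F 1) :
    ∃ x y, ‖x‖ = 1 ∧ ‖y‖ = 1 ∧ ‖x - y‖ ≤ 1 ∧ 2 / 3 ≤ ‖L (F x) - L (F y)‖ := by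
  classical
  obtain ⟨i, j, hij⟩ := exists_pair_ne ι
  have hone : ‖(1 : ι → ℝ)‖ = 1 := by simp [Pi.one_def]
  let u : ι → ℝ := Pi.single i 1
  have hu : ‖u‖ = 1 := by simp [u, Pi.norm_single]
  have hu_sub : ‖u - 1‖ = 1 := by
    refine pi_norm_eq_one_of_abs_apply_eq_one (fun l => ?_) (i := j) ?_
    · by_cases h : l = i <;> simp [u, h]
    · simp [u, hij.symm]
  have hends : dist (L (F 1)) (L (F (-1))) = 2 := by
    rw [hneg, map_neg, dist_eq_norm, sub_neg_eq_add, ← two_smul ℝ, norm_smul, hL 1 hone]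
    norm_num
  by_contra! h
  have hfst := h 1 u hone hu (by rw [norm_sub_rev, hu_sub])
  have hsnd := h u (u - 1) hu hu_sub (by rw [sub_sub_cancel, hone])
  have hthd := h (u - 1) (-1) hu_sub (by rw [norm_neg, hone]) (by simp [hu])
  rw [← dist_eq_norm] at hfst hsnd hthd
  linarith [dist_triangle4 (L (F 1)) (L (F u)) (L (F (u - 1))) (L (F (-1)))]

end StepPreserving

section Modulus

variable {X : Type*} [NormedAddCommGroup X] [NormedSpace ℝ X] {e : ℕ → X} {K : ℕ → ℕ} {d k : ℕ}
  {F : (Fin k → ℝ) → Fin k → ℝ}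

theorem exists_le_norm_sub_of_isConcentrated (he : IsOneUnconditional e) (hd : 0 < d)
    (hK : Monotone K) (hK0 : K 0 = 0) (hKk : K d ≤ k) {P : Set ℕ}
    (hP : ∃ m ∈ P, m ∈ Set.Ioc 0 (K 1)) (hPc : ∃ m ∉ P, m ∈ Set.Ioc 0 (K 1)) {δ : ℝ}
    (hconc : IsConcentrated e K d k P δ) (hconc_compl : IsConcentrated e K d k Pᶜ δ)
    (hlast : ∃ m ∈ Ioc (K d) k, e m ≠ 0) (hF : StepPreserving F)
    (hFnorm : ∀ x, ‖x‖ = 1 → ‖synthesis e k (F x)‖ = 1)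
    (hFcont : ContinuousOn (fun x => synthesis e k (F x)) {x | ‖x‖ = 1})
    (hneg : F (-1) = -F 1) :
    ∃ x y, ‖x‖ = 1 ∧ ‖y‖ = 1 ∧ ‖x - y‖ ≤ 1 / d ∧
      1 - 2 * δ ≤ ‖synthesis e k (F x) - synthesis e k (F y)‖ := by
  obtain ⟨m, hm, hem⟩ := hlast
  rw [mem_Ioc] at hm
  have hK1k : K 1 ≤ k := (hK hd).trans hKk
  have hG (t : ℝ) : ‖zigzag K d P k t‖ = 1 := norm_zigzag hd hK hK0 hK1k hP hPc
  have hH (t : ℝ) : ‖-zigzag K d Pᶜ k t‖ = 1 := by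
    rw [norm_neg]
    exact norm_zigzag hd hK hK0 hK1k hPc (by simpa using hP)
  obtain ⟨t, ht⟩ : ∃ t, F (zigzag K d P k t) ⟨m - 1, by omega⟩ = 0 :=
    exists_map_apply_eq_zero_of_path hneg hFcont (norm_pos_iff.2 hem)
      (fun v => by
        simpa [norm_smul, mul_comm ‖e m‖, Nat.sub_add_cancel (Nat.one_le_of_lt hm.1)] using
          he.norm_smul_le_norm_synthesis v ⟨m - 1, by omega⟩)
      continuous_zigzag hG (zigzag_of_le hd le_rfl) (zigzag_of_ge hd le_rfl)
  obtain ⟨c, hc⟩ := hF.exists_apply_eq (hG t)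
    (l := fun i => level K d P (i + 1)) fun i j hij => by simp only [zigzag, hij]
  obtain ⟨c', hc'⟩ := hF.exists_apply_eq (hH (-t))
    (l := fun i => level K d Pᶜ (i + 1)) fun i j hij => by simp only [Pi.neg_apply, zigzag, hij]
  have hFG := synthesis_eq_sum_Ioc (e := e) (f := fun m => c (level K d P m)) hc
  have hFH := synthesis_eq_sum_Ioc (e := e) (f := fun m => c' (level K d Pᶜ m)) hc'
  have hcd : c d = 0 := by
    rw [← ht, hc]
    simp [Nat.sub_add_cancel (Nat.one_le_of_lt hm.1), level_eq_of_lt hm.1]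
  refine ⟨zigzag K d P k t, -zigzag K d Pᶜ k (-t), hG t, hH _, ?_, ?_⟩
  · rw [sub_neg_eq_add]
    exact norm_zigzag_add_zigzag_compl_le K d P k t
  · rw [hFG, hFH]
    exact le_norm_sub_of_isConcentrated he hKk hconc hconc_compl hcd
      (hFG ▸ hFnorm _ (hG t)) (hFH ▸ hFnorm _ (hH _))

end Modulus

section CutPoints

variable {X : Type*} [NormedAddCommGroup X] [NormedSpace ℝ X]

/-- The cut points `0 < k_2 < k_3 < …` of the sequence `k_1 < k_2 < …`. -/
def cutPoints (kseq : ℕ → ℕ) : ℕ → ℕ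
  | 0 => 0
  | j + 1 => kseq (j + 2)

theorem cutPoints_of_pos (kseq : ℕ → ℕ) {j : ℕ} (hj : 0 < j) :
    cutPoints kseq j = kseq (j + 1) := by
  obtain ⟨i, rfl⟩ := Nat.exists_eq_add_of_lt hj
  rfl

theorem strictMono_cutPoints {kseq : ℕ → ℕ} (hkseq : StrictMonoOn kseq (Set.Ici 1)) :
    StrictMono (cutPoints kseq) :=
  strictMono_nat_of_lt_succ fun
    | 0 => (kseq 1).zero_le.trans_lt
        (hkseq (Set.mem_Ici.2 le_rfl) (Set.mem_Ici.2 one_le_two) one_lt_two)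
    | j + 1 =>
        hkseq (Set.mem_Ici.2 (by omega)) (Set.mem_Ici.2 (by omega)) (j + 2).lt_succ_self

theorem stmt_14_general {d : ℕ} (hd : 0 < d) {q p : ℝ} (hq : 0 < q) (hqp : q ≤ p) {e : ℕ → X}
    (he : IsOneUnconditional e) (hblock : HasBlockEstimates e q p) {P : Set ℕ} {kseq : ℕ → ℕ}
    (hkseq : StrictMonoOn kseq (Set.Ici 1)) (hψ : ∀ n, (psi e n - 1) / 2 ≤ psiP e P n)
    (hP : ∃ m ∈ P, m ∈ Set.Ioc 0 (kseq 2)) (hPc : ∃ m ∉ P, m ∈ Set.Ioc 0 (kseq 2))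
    {ε : ℝ} (hε : 0 < ε)
    (hgrowth : ∀ j, 1 ≤ j → (8 * (d : ℝ) ^ (1 / q - 1 / p) / ε + 2) * psi e (kseq j) + 1 ≤
      psi e (kseq (j + 1)))
    {k : ℕ} (hk : kseq (min (2 * d) (d + 2)) ≤ k) {F : (Fin k → ℝ) → Fin k → ℝ}
    (hF : StepPreserving F) (hFnorm : ∀ x, ‖x‖ = 1 → ‖synthesis e k (F x)‖ = 1)
    (hFcont : ContinuousOn (fun x => synthesis e k (F x)) {x | ‖x‖ = 1})
    (hne : synthesis e k (F 1) ≠ synthesis e k (F (-1))) :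
    ∃ x y, ‖x‖ = 1 ∧ ‖y‖ = 1 ∧ ‖x - y‖ ≤ 1 / d ∧
      min (2 / 3) (1 - ε / 2) ≤ ‖synthesis e k (F x) - synthesis e k (F y)‖ := by
  obtain ⟨m, hmP, hm⟩ := hP
  obtain ⟨n, hnP, hn⟩ := hPc
  have hmn : m ≠ n := fun h => hnP (h ▸ hmP)
  have hk_two : kseq 2 ≤ kseq (min (2 * d) (d + 2)) :=
    hkseq.monotoneOn (Set.mem_Ici.2 one_le_two) (Set.mem_Ici.2 (by omega)) (by omega)
  have : Nontrivial (Fin k) := by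
    rw [Fin.nontrivial_iff_two_le]
    rw [Set.mem_Ioc] at hm hn
    omega
  have hneg : F (-1) = -F 1 := hF.map_neg_one hFnorm hne
  rcases Nat.eq_or_lt_of_le hd with rfl | hd_one
  · obtain ⟨x, y, hx, hy, hxy, hle⟩ := exists_two_thirds_le_norm_sub hFnorm hneg
    exact ⟨x, y, hx, hy, by simpa using hxy, (min_le_left _ _).trans hle⟩
  · have hK := strictMono_cutPoints hkseq
    have hKk : cutPoints kseq (d + 1) ≤ k := by
      rwa [min_eq_right (by omega)] at hk
    have hconc {Q : Set ℕ} (hQ : ∀ n, (psi e n - 1) / 2 ≤ psiP e Q n) :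
        IsConcentrated e (cutPoints kseq) d k Q (ε / 4) :=
      isConcentrated_of_growth he hblock hq hqp hd hK rfl hKk hQ hε fun j _ =>
        hgrowth (j + 2) (by omega)
    obtain ⟨l, hl, hel⟩ : ∃ l ∈ Ioc (cutPoints kseq d) (cutPoints kseq (d + 1)), e l ≠ 0 := by
      refine exists_mem_Ioc_ne_zero_of_growth (hK.monotone d.le_succ) ?_
        (cutPoints_of_pos kseq hd ▸ hgrowth (d + 1) (by omega))
      have : 0 ≤ 8 * (d : ℝ) ^ (1 / q - 1 / p) / ε := by positivity
      linarith
    obtain ⟨x, y, hx, hy, hxy, hle⟩ := exists_le_norm_sub_of_isConcentrated he hd hK.monotone rfl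
      ((hK d.lt_succ_self).le.trans hKk) ⟨m, hmP, hm⟩ ⟨n, hnP, hn⟩ (hconc hψ)
      (hconc (by simpa only [psiP_compl] using hψ)) ⟨l, Ioc_subset_Ioc_right hKk hl, hel⟩
      hF hFnorm hFcont hneg
    exact ⟨x, y, hx, hy, hxy, (min_le_right _ _).trans (le_trans (by linarith) hle)⟩

end CutPoints

/-- Theorem 5.1 of the paper: under Assumption A(d, 1/2), any step
preserving continuous map `F : S_{ℓ∞^k} → S_{X_k}` with `k > k_{2d}` and
`F(1,…,1) ≠ F(-1,…,-1)` satisfies `ω_F(1/d) ≥ 1/2`. -/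
theorem stmt_14 {X : Type*} [NormedAddCommGroup X] [NormedSpace ℝ X]
    (d : ℕ) (hd : 1 ≤ d) (q p : ℝ) (hq : 1 ≤ q) (hqp : q ≤ p)
    (e : ℕ → X)
    (hnorm : ∀ i, 1 ≤ i → ‖e i‖ = 1)
    (huncond : ∀ (s : Finset ℕ) (a b : ℕ → ℝ), (∀ i ∈ s, |a i| ≤ |b i|) →
      ‖∑ i ∈ s, a i • e i‖ ≤ ‖∑ i ∈ s, b i • e i‖)
    (hblock : ∀ (N : ℕ) (x : ℕ → X) (s : ℕ → ℕ),
      (∀ i, i < N → s i < s (i + 1)) →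
      (∀ i, i < N → x i ∈ Submodule.span ℝ (e '' {j | s i ≤ j ∧ j < s (i + 1)})) →
      (∑ i ∈ Finset.range N, ‖x i‖ ^ p) ^ (1 / p) ≤ ‖∑ i ∈ Finset.range N, x i‖ ∧
        ‖∑ i ∈ Finset.range N, x i‖ ≤ (∑ i ∈ Finset.range N, ‖x i‖ ^ q) ^ (1 / q))
    -- `P` and `M = {kseq 1 < kseq 2 < …}` satisfy Assumption A(d, 1/2):
    (P : Set ℕ) (kseq : ℕ → ℕ)
    (hkmono : ∀ j, 1 ≤ j → kseq j < kseq (j + 1))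
    (hA1 : ∀ k, (psi e k - 1) / 2 ≤ psiP e P k)
    (hA2 : ∀ j, 1 ≤ j → (∃ i, kseq j < i ∧ i ≤ kseq (j + 1) ∧ i ∈ P) ∧
      (∃ i, kseq j < i ∧ i ≤ kseq (j + 1) ∧ i ∉ P))
    (hA3 : ∀ j, 1 ≤ j →
      (8 * (d : ℝ) ^ ((1 : ℝ) / q - 1 / p) / (1 / 2 : ℝ) + 2) * psi e (kseq j) + 1 ≤
        psi e (kseq (j + 1)))
    (k : ℕ) (hk : kseq (2 * d) < k)
    (F : (Fin k → ℝ) → (Fin k → ℝ))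
    (hFmaps : ∀ x, supNorm x = 1 → ‖∑ i : Fin k, F x i • e ((i : ℕ) + 1)‖ = 1)
    (hFcont : ContinuousOn (fun x => ∑ i : Fin k, F x i • e ((i : ℕ) + 1))
      {x | supNorm x = 1})
    (hstep : ∀ x, supNorm x = 1 → ∀ i j, x i = x j → F x i = F x j)
    (hne : (∑ i : Fin k, F (fun _ => (1 : ℝ)) i • e ((i : ℕ) + 1)) ≠
      ∑ i : Fin k, F (fun _ => (-1 : ℝ)) i • e ((i : ℕ) + 1)) :
    ∃ x y : Fin k → ℝ, supNorm x = 1 ∧ supNorm y = 1 ∧ supNorm (x - y) ≤ 1 / (d : ℝ) ∧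
      1 / 2 ≤ ‖(∑ i : Fin k, F x i • e ((i : ℕ) + 1)) -
        ∑ i : Fin k, F y i • e ((i : ℕ) + 1)‖ := by
  simp only [supNorm_eq_norm] at hFmaps hFcont hstep ⊢
  obtain ⟨⟨m, hm, hmk, hmP⟩, n, hn, hnk, hnP⟩ := hA2 1 le_rfl
  have hkseq : StrictMonoOn kseq (Set.Ici 1) :=
    strictMonoOn_of_lt_succ Set.ordConnected_Ici fun j _ hj _ => hkmono j hj
  have hk_min : kseq (min (2 * d) (d + 2)) ≤ kseq (2 * d) :=
    hkseq.monotoneOn (Set.mem_Ici.2 (by omega)) (Set.mem_Ici.2 (by omega)) (min_le_left _ _)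
  obtain ⟨x, y, hx, hy, hxy, hle⟩ := stmt_14_general hd (zero_lt_one.trans_le hq) hqp huncond
    (fun N x ⟨s, hs, hx⟩ => hblock N x s hs hx) hkseq hA1 ⟨m, hmP, by omega, hmk⟩
    ⟨n, hnP, by omega, hnk⟩ one_half_pos hA3 (hk_min.trans hk.le) hstep hFmaps hFcont hne
  exact ⟨x, y, hx, hy, hxy, le_trans (by norm_num) hle⟩
end
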